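/- Let Q_0, Q_1, …, Q_T : Ω → (S×A → ℝ) be random functions and ε ≥ 0 be such that 𝔼[‖Q_k − 𝒯Q_{k−1}‖₂²] ≤ ε for every k ∈ {1,…,T}. Then 𝔼[‖Q_T − Q*‖_∞] ≤ √ε/(1−γ) + γ^T · 𝔼[‖Q_0 − Q*‖_∞]. -/

import Mathlib

open MeasureTheory ProbabilityTheory Finset

/-- sup norm of a real function on a finite nonempty type. -/
noncomputable def supNorm {ι : Type*} [Fintype ι] [Nonempty ι] (f : ι → ℝ) : ℝ :=
  Finset.univ.sup' Finset.univ_nonempty (fun i => |f i|)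

/-- squared Euclidean norm of a real function on a finite type. -/
def sqNorm {ι : Type*} [Fintype ι] (f : ι → ℝ) : ℝ := ∑ i, (f i) ^ 2

/-- Bellman optimality operator. -/
noncomputable def bellman {S A : Type*} [Fintype S] [Fintype A] [Nonempty A]
    (P : S → A → S → ℝ) (r : S → A → ℝ) (γ : ℝ) (Q : S × A → ℝ) : S × A → ℝ :=
  fun x => r x.1 x.2 + γ * ∑ s' : S, P x.1 x.2 s' *
    Finset.univ.sup' Finset.univ_nonempty (fun a' => Q (s', a'))


lemma abs_le_supNorm {ι : Type*} [Fintype ι] [Nonempty ι] (f : ι → ℝ) (i : ι) :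
    |f i| ≤ supNorm f :=
  Finset.le_sup' (fun i => |f i|) (Finset.mem_univ i)

lemma supNorm_le {ι : Type*} [Fintype ι] [Nonempty ι] (f : ι → ℝ) (c : ℝ)
    (h : ∀ i, |f i| ≤ c) : supNorm f ≤ c :=
  Finset.sup'_le _ _ (fun i _ => h i)

lemma abs_le_sqrt_sqNorm {ι : Type*} [Fintype ι] (f : ι → ℝ) (i : ι) :
    |f i| ≤ Real.sqrt (sqNorm f) := by
  apply Real.abs_le_sqrt
  exact Finset.single_le_sum (f := fun i => (f i) ^ 2) (fun j _ => sq_nonneg _)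
    (Finset.mem_univ i)

lemma sqNorm_nonneg' {ι : Type*} [Fintype ι] (f : ι → ℝ) : 0 ≤ sqNorm f :=
  Finset.sum_nonneg (fun j _ => sq_nonneg _)

lemma sup_le_sup_add {A : Type*} [Fintype A] [Nonempty A] (f g : A → ℝ) (c : ℝ)
    (h : ∀ a, |f a - g a| ≤ c) :
    Finset.univ.sup' Finset.univ_nonempty f ≤
      Finset.univ.sup' Finset.univ_nonempty g + c := by
  apply Finset.sup'_le
  intro a _
  have h1 := Finset.le_sup' g (Finset.mem_univ a)
  have h2 := (abs_le.mp (h a)).2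
  linarith

lemma abs_sup_sub_le {A : Type*} [Fintype A] [Nonempty A] (f g : A → ℝ) (c : ℝ)
    (h : ∀ a, |f a - g a| ≤ c) :
    |Finset.univ.sup' Finset.univ_nonempty f -
      Finset.univ.sup' Finset.univ_nonempty g| ≤ c := by
  have h1 := sup_le_sup_add f g c h
  have h2 := sup_le_sup_add g f c (fun a => by rw [abs_sub_comm]; exact h a)
  rw [abs_le]
  constructor <;> linarith

lemma bellman_contr {S A : Type*} [Fintype S] [Fintype A] [Nonempty S] [Nonempty A]
    (P : S → A → S → ℝ) (hP0 : ∀ s a s', 0 ≤ P s a s') (hP1 : ∀ s a, ∑ s', P s a s' = 1)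
    (r : S → A → ℝ) (γ : ℝ) (hγ : 0 ≤ γ) (Q R : S × A → ℝ) (x : S × A) :
    |bellman P r γ Q x - bellman P r γ R x| ≤ γ * supNorm (fun x => Q x - R x) := by
  have e : bellman P r γ Q x - bellman P r γ R x = γ * ∑ s', P x.1 x.2 s' *
      (Finset.univ.sup' Finset.univ_nonempty (fun a' => Q (s', a')) -
       Finset.univ.sup' Finset.univ_nonempty (fun a' => R (s', a'))) := by
    simp only [bellman, mul_sub, Finset.sum_sub_distrib]
    ring
  rw [e, abs_mul, abs_of_nonneg hγ]
  apply mul_le_mul_of_nonneg_left _ hγ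
  calc _ ≤ ∑ s', |P x.1 x.2 s' *
      (Finset.univ.sup' Finset.univ_nonempty (fun a' => Q (s', a')) -
       Finset.univ.sup' Finset.univ_nonempty (fun a' => R (s', a')))| :=
        Finset.abs_sum_le_sum_abs _ _
    _ ≤ ∑ s', P x.1 x.2 s' * supNorm (fun x => Q x - R x) := by
        apply Finset.sum_le_sum
        intro s' _
        rw [abs_mul, abs_of_nonneg (hP0 _ _ _)]
        apply mul_le_mul_of_nonneg_left _ (hP0 _ _ _)
        exact abs_sup_sub_le _ _ _ (fun a => abs_le_supNorm (fun x => Q x - R x) (s', a))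
    _ = _ := by rw [← Finset.sum_mul, hP1, one_mul]

lemma sqrt_integrable {Ω : Type*} [MeasurableSpace Ω] (μ : Measure Ω) [IsProbabilityMeasure μ]
    (X : Ω → ℝ) (h0 : ∀ ω, 0 ≤ X ω) (hX : Integrable X μ) :
    Integrable (fun ω => Real.sqrt (X ω)) μ := by
  refine Integrable.mono' (hX.add (integrable_const 1))
    (Real.continuous_sqrt.comp_aestronglyMeasurable hX.1) (Filter.Eventually.of_forall ?_)
  intro ω
  rw [Real.norm_of_nonneg (Real.sqrt_nonneg _)]
  simp only [Pi.add_apply]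
  nlinarith [Real.sq_sqrt (h0 ω), sq_nonneg (Real.sqrt (X ω) - 1), h0 ω]

lemma integral_sqrt_le {Ω : Type*} [MeasurableSpace Ω] (μ : Measure Ω) [IsProbabilityMeasure μ]
    (X : Ω → ℝ) (h0 : ∀ ω, 0 ≤ X ω) (hX : Integrable X μ) (ε : ℝ) (h : ∫ ω, X ω ∂μ ≤ ε) :
    ∫ ω, Real.sqrt (X ω) ∂μ ≤ Real.sqrt ε := by
  have hs := sqrt_integrable μ X h0 hX
  set m := ∫ ω, Real.sqrt (X ω) ∂μ with hm
  apply Real.le_sqrt_of_sq_le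
  have h1 : ∫ ω, (2 * m * Real.sqrt (X ω) - m ^ 2) ∂μ ≤ ∫ ω, X ω ∂μ := by
    apply integral_mono ((hs.const_mul _).sub (integrable_const _)) hX
    intro ω
    simp only [Pi.sub_apply]
    nlinarith [Real.sq_sqrt (h0 ω), sq_nonneg (Real.sqrt (X ω) - m)]
  rw [integral_sub (hs.const_mul _) (integrable_const _), integral_const_mul, ← hm] at h1
  simp at h1
  nlinarith

theorem outer_iteration_convergence_uniform_error
    {S A : Type*} [Fintype S] [Fintype A] [Nonempty S] [Nonempty A]
    {Ω : Type*} [MeasurableSpace Ω] (μ : Measure Ω) [IsProbabilityMeasure μ]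
    (P : S → A → S → ℝ) (hP0 : ∀ s a s', 0 ≤ P s a s') (hP1 : ∀ s a, ∑ s', P s a s' = 1)
    (r : S → A → ℝ) (hr : ∀ s a, |r s a| ≤ 1)
    (γ : ℝ) (hγ : γ ∈ Set.Ioo (0 : ℝ) 1)
    (Qstar : S × A → ℝ) (hQstar : bellman P r γ Qstar = Qstar)
    (T : ℕ) (Q : ℕ → Ω → S × A → ℝ) (hQmeas : ∀ k, Measurable (Q k))
    (ε : ℝ) (hε0 : 0 ≤ ε)
    (hmomInt : ∀ k ∈ Finset.Icc 1 T,
      Integrable (fun ω => sqNorm (fun x => Q k ω x - bellman P r γ (Q (k - 1) ω) x)) μ)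
    (hmom : ∀ k ∈ Finset.Icc 1 T,
      ∫ ω, sqNorm (fun x => Q k ω x - bellman P r γ (Q (k - 1) ω) x) ∂μ ≤ ε)
    (hint : ∀ k, Integrable (fun ω => supNorm (fun x => Q k ω x - Qstar x)) μ) :
    ∫ ω, supNorm (fun x => Q T ω x - Qstar x) ∂μ ≤
      Real.sqrt ε / (1 - γ)
        + γ ^ T * ∫ ω, supNorm (fun x => Q 0 ω x - Qstar x) ∂μ := by
  obtain ⟨hγ0, hγ1⟩ := hγ
  have key : ∀ k, k ≤ T → ∫ ω, supNorm (fun x => Q k ω x - Qstar x) ∂μ ≤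
      Real.sqrt ε / (1 - γ)
        + γ ^ k * ∫ ω, supNorm (fun x => Q 0 ω x - Qstar x) ∂μ := by
    intro k
    induction k with
    | zero =>
      intro _
      have : 0 ≤ Real.sqrt ε / (1 - γ) := div_nonneg (Real.sqrt_nonneg _) (by linarith)
      simpa using this
    | succ k ih =>
      intro hk
      have ih := ih (by omega)
      have hmem : k + 1 ∈ Finset.Icc 1 T := by simp; omega
      have hI := hmomInt _ hmem
      have hM := hmom _ hmem
      simp only [Nat.add_sub_cancel] at hI hM
      have hs := sqrt_integrable μ _ (fun ω => sqNorm_nonneg' _) hI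
      have hb := integral_sqrt_le μ _ (fun ω => sqNorm_nonneg' _) hI ε hM
      have step : ∫ ω, supNorm (fun x => Q (k + 1) ω x - Qstar x) ∂μ ≤
          ∫ ω, (Real.sqrt (sqNorm (fun x => Q (k + 1) ω x - bellman P r γ (Q k ω) x))
            + γ * supNorm (fun x => Q k ω x - Qstar x)) ∂μ := by
        apply integral_mono (hint _) (hs.add ((hint k).const_mul γ))
        intro ω
        apply supNorm_le
        intro x
        have h1 := abs_le_sqrt_sqNorm
          (fun x => Q (k + 1) ω x - bellman P r γ (Q k ω) x) x
        have h2 := bellman_contr P hP0 hP1 r γ hγ0.le (Q k ω) Qstar x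
        rw [hQstar] at h2
        exact (abs_sub_le _ (bellman P r γ (Q k ω) x) _).trans (add_le_add h1 h2)
      rw [integral_add hs ((hint k).const_mul γ), integral_const_mul] at step
      have h3 := mul_le_mul_of_nonneg_left ih hγ0.le
      have h4 : Real.sqrt ε / (1 - γ) = Real.sqrt ε + γ * (Real.sqrt ε / (1 - γ)) := by
        have : 1 - γ ≠ 0 := by linarith
        field_simp
        ring
      rw [pow_succ]
      linarith
  exact key T le_rfl
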